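/- arXiv:1904.03637 — 2 statements merged into one kernel-verified Lean document; each statement's English description precedes it below -/
import Mathlib

section
/- For every integer n with 2 ≤ n < ω and every countable ordinal α ≥ ω, the big Ramsey degree T(n, ω^α) is infinite; i.e., for every t there exist k and a k-coloring of the n-element subchains of ω^α such that every subchain of ω^α order-isomorphic to ω^α attains at least t colors. -/
open Set

/-- The big Ramsey degree of the `n`-element chain in the chain `C` is at most `t`:
for every `k ≥ 2` and every `k`-coloring of the `n`-element subchains of `C`
(identified with order-embeddings `Fin n ↪o C`) there is a subset `U ⊆ C`
order-isomorphic to `C` on which the coloring attains at most `t` values. -/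
def brdLE (C : Type*) [LinearOrder C] (n t : ℕ) : Prop :=
  ∀ k : ℕ, 2 ≤ k → ∀ χ : (Fin n ↪o C) → Fin k,
    ∃ U : Set C, Nonempty (U ≃o C) ∧ (χ '' {f | ∀ i, f i ∈ U}).ncard ≤ t

/-- `T(n, C) = t`: `t` is the least natural number with `brdLE C n t`. -/
def hasBRD (C : Type*) [LinearOrder C] (n t : ℕ) : Prop :=
  brdLE C n t ∧ ∀ s : ℕ, brdLE C n s → t ≤ s

/-- `C` has finite big Ramsey degrees: `T(n, C) < ∞` for every `n ≥ 1`. -/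
def finiteBRD (C : Type*) [LinearOrder C] : Prop :=
  ∀ n : ℕ, 1 ≤ n → ∃ t : ℕ, brdLE C n t

/-!
Enumerate the countable chain `W` injectively by `e : W → ℕ` and attach to each point `x` the finite
set of values at which `e`, read upwards from `x`, attains a new minimum. Moving `x` slightly below
a limit `a` keeps the set of `a` and adds elements as large as we like. Hence moving a pair
`a < b` of limits down to `a' < a < b' < b`, first `a` and then `b`, raises the oscillation of the
two sets by exactly one. Suprema of pieces of a copy of `ω^(m + 2)` provide a pair of points from
which this can be done up to `m` times before landing in the copy, so every such copy realizes `m`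
consecutive oscillation numbers. The `2`-adic valuation takes every value up to `i` on any
`2^(i + 1)` consecutive integers, so coloring pairs by the valuation of their oscillation number
makes every copy of `ω^ω` realize all colors.
-/

section Oscillation

variable {ι : Type*} [LinearOrder ι] {s s' t t' : Finset ι}

/-- Todorcevic's oscillation of two finite sets: the number of blocks into which the elements of `t`
are divided by those of `s`, a block being determined by the number of elements of `s` below it. -/
def oscNumber (s t : Finset ι) : ℕ :=
  (t.image fun b => {a ∈ s | a < b}.card).card

theorem oscNumber_union_union (hs' : s'.Nonempty) (ht' : t'.Nonempty)
    (hts' : ∀ b ∈ t, ∀ a ∈ s', b < a) (hst' : ∀ a ∈ s ∪ s', ∀ b ∈ t', a < b) :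
    oscNumber (s ∪ s') (t ∪ t') = oscNumber s t + 1 := by
  have old_block : ∀ b ∈ t, {a ∈ s ∪ s' | a < b} = {a ∈ s | a < b} := fun b hb => by
    rw [Finset.filter_union, Finset.filter_false_of_mem fun a ha => (hts' b hb a ha).not_gt,
      Finset.union_empty]
  have new_block : ∀ b ∈ t', {a ∈ s ∪ s' | a < b} = s ∪ s' := fun b hb =>
    Finset.filter_true_of_mem fun a ha => hst' a ha b hb
  have old_card_lt : ∀ b ∈ t, {a ∈ s | a < b}.card < (s ∪ s').card := fun b hb => by
    obtain ⟨a, ha⟩ := hs'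
    rw [← old_block b hb]
    exact Finset.card_lt_card <| Finset.filter_ssubset.2
      ⟨a, Finset.mem_union_right s ha, (hts' b hb a ha).not_gt⟩
  have image_new : t'.image (fun b => {a ∈ s ∪ s' | a < b}.card) = {(s ∪ s').card} := by
    rw [Finset.image_congr fun b hb => congrArg Finset.card (new_block b hb),
      Finset.image_const ht']
  rw [oscNumber, Finset.image_union, image_new, Finset.union_comm, ← Finset.insert_eq,
    Finset.image_congr fun b hb => congrArg Finset.card (old_block b hb),
    Finset.card_insert_of_notMem, oscNumber]
  rw [Finset.mem_image]
  rintro ⟨b, hb, hcard⟩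
  exact (old_card_lt b hb).ne hcard

end Oscillation

section Records

variable {W : Type*} [LinearOrder W] {e : W → ℕ} {x a a' : W} {k N : ℕ}

open Classical in
/-- The values of the left-to-right minima of `e` on the final segment starting at `x`. Searching
only up to `e x` loses nothing and makes the finiteness of this set evident. -/
noncomputable def recordValues (e : W → ℕ) (x : W) : Finset ℕ :=
  {k ∈ Finset.Iic (e x) | ∃ z ≥ x, e z = k ∧ ∀ w ∈ Ico x z, k < e w}

theorem le_of_mem_recordValues (hk : k ∈ recordValues e x) : k ≤ e x := by
  simp only [recordValues, Finset.mem_filter, Finset.mem_Iic] at hk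
  exact hk.1

theorem mem_recordValues :
    k ∈ recordValues e x ↔ ∃ z ≥ x, e z = k ∧ ∀ w ∈ Ico x z, k < e w := by
  simp only [recordValues, Finset.mem_filter, Finset.mem_Iic, and_iff_right_iff_imp]
  rintro ⟨z, hxz, rfl, hz⟩
  obtain rfl | hlt := hxz.eq_or_lt
  · exact le_rfl
  · exact (hz x ⟨le_rfl, hlt⟩).le

theorem apply_mem_recordValues (e : W → ℕ) (x : W) : e x ∈ recordValues e x :=
  mem_recordValues.2 ⟨x, le_rfl, rfl, fun _ hw => absurd hw.2 hw.1.not_gt⟩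

theorem recordValues_subset_of_le (haa : a' ≤ a) (he : ∀ w ∈ Ico a' a, e a < e w) :
    recordValues e a ⊆ recordValues e a' := by
  intro k hk
  obtain ⟨z, haz, hzk, hz⟩ := mem_recordValues.1 hk
  refine mem_recordValues.2 ⟨z, haa.trans haz, hzk, fun w hw => ?_⟩
  obtain hwa | haw := lt_or_ge w a
  · exact (le_of_mem_recordValues hk).trans_lt (he w ⟨hw.1, hwa⟩)
  · exact hz w ⟨haw, hw.2⟩

theorem mem_recordValues_or_lt (haa : a' ≤ a) (he : ∀ w ∈ Ico a' a, N < e w)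
    (hk : k ∈ recordValues e a') : k ∈ recordValues e a ∨ N < k := by
  obtain ⟨z, haz, rfl, hz⟩ := mem_recordValues.1 hk
  obtain hza | haz' := lt_or_ge z a
  · exact .inr (he z ⟨haz, hza⟩)
  · exact .inl (mem_recordValues.2 ⟨z, haz', rfl, fun w hw => hz w ⟨haa.trans hw.1, hw.2⟩⟩)

theorem exists_recordValues_eq_union (haa : a' < a) (hN : e a ≤ N)
    (he : ∀ w ∈ Ico a' a, N < e w) :
    ∃ s : Finset ℕ, s.Nonempty ∧ (∀ k ∈ s, N < k) ∧
      recordValues e a' = recordValues e a ∪ s := by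
  refine ⟨{k ∈ recordValues e a' | N < k},
    ⟨e a', Finset.mem_filter.2 ⟨apply_mem_recordValues e a', he a' ⟨le_rfl, haa⟩⟩⟩,
    fun k hk => (Finset.mem_filter.1 hk).2, Finset.Subset.antisymm (fun k hk => ?_) ?_⟩
  · exact Finset.mem_union.2 <| (mem_recordValues_or_lt haa.le he hk).imp_right
      fun hlt => Finset.mem_filter.2 ⟨hk, hlt⟩
  · exact Finset.union_subset
      (recordValues_subset_of_le haa.le fun w hw => hN.trans_lt (he w hw))
      (Finset.filter_subset _ _)

theorem oscNumber_recordValues_eq_add_one {b b' : W} (haa : a' < a) (hbb : b' < b)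
    (hea : ∀ w ∈ Ico a' a, max (e a) (e b) < e w) (heb : ∀ w ∈ Ico b' b, e a' < e w) :
    oscNumber (recordValues e a') (recordValues e b') =
      oscNumber (recordValues e a) (recordValues e b) + 1 := by
  have hba : e b < e a' := (le_max_right _ _).trans_lt (hea a' ⟨le_rfl, haa⟩)
  obtain ⟨s', hs', hs'_gt, hs⟩ := exists_recordValues_eq_union haa (le_max_left _ _) hea
  obtain ⟨t', ht', ht'_gt, ht⟩ := exists_recordValues_eq_union hbb hba.le heb
  rw [hs, ht]
  refine oscNumber_union_union hs' ht' (fun k hk l hl => ?_) (fun k hk l hl => ?_)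
  · exact ((le_of_mem_recordValues hk).trans (le_max_right _ _)).trans_lt (hs'_gt l hl)
  · exact (le_of_mem_recordValues (hs ▸ hk)).trans_lt (ht'_gt l hl)

end Records

section LeftLimitPoints

variable {V W : Type*} {X Y : Set W} {z : W}

/-- The one-sided Cantor–Bendixson derivative: the points of the chain that are limits of `X` from
the left. A least point is excluded, although the second condition holds for it vacuously. The
`m`-th iterate holds the points from which `m` approximations from below lead into `X`. -/
def leftLimitPoints [Preorder W] (X : Set W) : Set W :=
  {z | (Iio z).Nonempty ∧ ∀ u < z, (X ∩ Ioo u z).Nonempty}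

theorem leftLimitPoints_mono [Preorder W] (h : X ⊆ Y) : leftLimitPoints X ⊆ leftLimitPoints Y :=
  fun _ hz => ⟨hz.1, fun u hu => (hz.2 u hu).mono (inter_subset_inter_left _ h)⟩

theorem leftLimitPoints_leftLimitPoints_subset [Preorder W] (X : Set W) :
    leftLimitPoints (leftLimitPoints X) ⊆ leftLimitPoints X := by
  refine fun z hz => ⟨hz.1, fun u hu => ?_⟩
  obtain ⟨y, hy, huy, hyz⟩ := hz.2 u hu
  obtain ⟨x, hx, hux, hxy⟩ := hy.2 u huy
  exact ⟨x, hx, hux, hxy.trans hyz⟩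

theorem antitone_iterate_succ_leftLimitPoints [Preorder W] (X : Set W) :
    Antitone fun m : ℕ => leftLimitPoints^[m + 1] X := by
  refine antitone_nat_of_succ_le fun m => ?_
  simp only [Function.iterate_succ_apply']
  exact leftLimitPoints_leftLimitPoints_subset _

theorem exists_mem_forall_Ico_lt_apply [LinearOrder W] {e : W → ℕ} (he : e.Injective)
    (hz : z ∈ leftLimitPoints X) {v : W} (hv : v < z) (N : ℕ) :
    ∃ x ∈ X, v < x ∧ x < z ∧ ∀ w ∈ Ico x z, N < e w := by
  have hfin : (insert v {w | w < z ∧ e w ≤ N}).Finite :=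
    (((finite_Iic N).preimage he.injOn).subset fun _ hw => hw.2).insert v
  obtain ⟨u, hu, hmax⟩ := exists_max_image _ id hfin (insert_nonempty _ _)
  have huz : u < z := hu.elim (fun h => h ▸ hv) And.left
  obtain ⟨x, hx, hux, hxz⟩ := hz.2 u huz
  refine ⟨x, hx, (hmax v (mem_insert _ _)).trans_lt hux, hxz, fun w hw => ?_⟩
  by_contra! hle
  exact (hux.trans_le hw.1).not_ge (hmax w (mem_insert_of_mem _ ⟨hw.2, hle⟩))

theorem exists_oscNumber_eq_add [LinearOrder W] {e : W → ℕ} (he : e.Injective) (m : ℕ) {a b : W}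
    (hab : a < b) (ha : a ∈ leftLimitPoints^[m] X) (hb : b ∈ leftLimitPoints^[m] X) :
    ∃ x ∈ X, ∃ y ∈ X, x < y ∧ oscNumber (recordValues e x) (recordValues e y) =
      oscNumber (recordValues e a) (recordValues e b) + m := by
  induction m generalizing a b with
  | zero => exact ⟨a, ha, b, hb, hab, rfl⟩
  | succ m ih =>
    rw [Function.iterate_succ_apply'] at ha hb
    obtain ⟨u, hu⟩ := ha.1
    obtain ⟨a', ha', -, haa, hea⟩ := exists_mem_forall_Ico_lt_apply he ha hu (max (e a) (e b))
    obtain ⟨b', hb', hab', hbb, heb⟩ := exists_mem_forall_Ico_lt_apply he hb hab (e a')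
    obtain ⟨x, hx, y, hy, hxy, hosc⟩ := ih (haa.trans hab') ha' hb'
    refine ⟨x, hx, y, hy, hxy, ?_⟩
    rw [hosc, oscNumber_recordValues_eq_add_one haa hbb hea heb, Nat.add_right_comm, Nat.add_assoc]

theorem exists_forall_Ioc_oscNumber_eq [LinearOrder W] {e : W → ℕ} (he : e.Injective) (m : ℕ)
    (hX : (leftLimitPoints^[m + 1] X).Nonempty) :
    ∃ d, ∀ k ∈ Ioc d (d + m), ∃ x ∈ X, ∃ y ∈ X, x < y ∧
      oscNumber (recordValues e x) (recordValues e y) = k := by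
  obtain ⟨z, hz⟩ := hX
  rw [Function.iterate_succ_apply'] at hz
  obtain ⟨u, hu⟩ := hz.1
  obtain ⟨a, ha, -, haz⟩ := hz.2 u hu
  obtain ⟨b, hb, hab, -⟩ := hz.2 a haz
  refine ⟨oscNumber (recordValues e a) (recordValues e b), fun k ⟨hdk, hkm⟩ => ?_⟩
  obtain ⟨i, rfl⟩ := Nat.exists_eq_add_of_lt hdk
  obtain ⟨m, rfl⟩ : ∃ m', m = m' + 1 := Nat.exists_eq_add_one.2 (by omega)
  have hle : leftLimitPoints^[m + 1] X ⊆ leftLimitPoints^[i + 1] X :=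
    antitone_iterate_succ_leftLimitPoints X (by omega)
  exact exists_oscNumber_eq_add he (i + 1) hab (hle ha) (hle hb)

variable [Preorder V] [ConditionallyCompleteLinearOrder W] {f : V → W}

theorem sSup_image_Iio_mem_leftLimitPoints_image (hf : StrictMono f) {g : V → W} {S : Set V}
    (hg : ∀ y ∈ S, (∀ w < y, f w ≤ g y) ∧ ∀ w > y, g y ≤ f w) {v : V}
    (hv : v ∈ leftLimitPoints S) : sSup (f '' Iio v) ∈ leftLimitPoints (g '' S) := by
  have hlub : IsLUB (f '' Iio v) (sSup (f '' Iio v)) :=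
    isLUB_csSup (hv.1.image f) ⟨f v, forall_mem_image.2 fun _ hw => (hf hw).le⟩
  have apply_lt : ∀ w < v, f w < sSup (f '' Iio v) := fun w hw => by
    obtain ⟨w', -, hww', hw'v⟩ := hv.2 w hw
    exact (hf hww').trans_le (hlub.1 (mem_image_of_mem f hw'v))
  obtain ⟨w₀, hw₀⟩ := hv.1
  refine ⟨⟨f w₀, apply_lt w₀ hw₀⟩, fun u hu => ?_⟩
  obtain ⟨-, ⟨w, hw, rfl⟩, huw⟩ := (lt_isLUB_iff hlub).1 hu
  obtain ⟨y, hy, hwy, hyv⟩ := hv.2 w hw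
  obtain ⟨y', -, hyy', hy'v⟩ := hv.2 y hyv
  exact ⟨g y, mem_image_of_mem g hy, huw.trans_le ((hg y hy).1 w hwy),
    ((hg y hy).2 y' hyy').trans_lt (apply_lt y' hy'v)⟩

theorem sSup_image_Iio_mem_iterate_leftLimitPoints_range (hf : StrictMono f) (m : ℕ) {v : V}
    (hv : v ∈ leftLimitPoints^[m + 1] univ) :
    sSup (f '' Iio v) ∈ leftLimitPoints^[m + 1] (range f) := by
  induction m generalizing v with
  | zero =>
    have hself : ∀ y ∈ univ, (∀ w < y, f w ≤ f y) ∧ ∀ w > y, f y ≤ f w :=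
      fun _ _ => ⟨fun _ hw => (hf hw).le, fun _ hw => (hf hw).le⟩
    simpa only [zero_add, Function.iterate_one, image_univ] using
      sSup_image_Iio_mem_leftLimitPoints_image hf hself hv
  | succ m ih =>
    rw [Function.iterate_succ_apply'] at hv ⊢
    refine leftLimitPoints_mono (image_subset_iff.2 fun _ => ih)
      (sSup_image_Iio_mem_leftLimitPoints_image hf
        (fun y hy => ⟨fun w hw => ?_, fun w hw => ?_⟩) hv)
    · exact le_csSup ⟨f y, forall_mem_image.2 fun _ hu => (hf hu).le⟩ (mem_image_of_mem f hw)
    · rw [Function.iterate_succ_apply'] at hy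
      exact csSup_le (hy.1.image f) (forall_mem_image.2 fun u hu => (hf (lt_trans hu hw)).le)

end LeftLimitPoints

section Ordinal

open Ordinal

theorem add_omega0_opow_lt_of_lt_add {a b β γ : Ordinal} (hβγ : β < γ) (hab : a ≤ b)
    (hb : b < a + ω ^ γ) : b + ω ^ β < a + ω ^ γ := by
  obtain ⟨c, rfl⟩ := exists_add_of_le hab
  rw [add_assoc]
  gcongr
  exact isPrincipal_add_omega0_opow γ (lt_of_add_lt_add_left hb)
    ((opow_lt_opow_iff_right one_lt_omega0).2 hβγ)

theorem mem_iterate_leftLimitPoints_univ {o a : Ordinal} (m : ℕ) {v : Iio o}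
    (hv : v = a + ω ^ (m : Ordinal)) : v ∈ leftLimitPoints^[m] univ := by
  induction m generalizing a v with
  | zero => trivial
  | succ m ih =>
    have hav : a < v := hv ▸ lt_add_of_pos_right a (opow_pos _ omega0_pos)
    rw [Function.iterate_succ_apply']
    refine ⟨⟨⟨a, hav.trans v.2⟩, hav⟩, fun u hu => ?_⟩
    have hlt : max a u + ω ^ (m : Ordinal) < v := hv ▸ add_omega0_opow_lt_of_lt_add
      (Nat.cast_lt.2 m.lt_succ_self) (le_max_left a u) (hv ▸ max_lt hav hu)
    exact ⟨⟨_, hlt.trans v.2⟩, ih rfl, (le_max_right a u.1).trans_lt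
      (lt_add_of_pos_right _ (opow_pos _ omega0_pos)), hlt⟩

theorem nonempty_iterate_leftLimitPoints_range {W : Type*} [ConditionallyCompleteLinearOrder W]
    {m : ℕ} {o : Ordinal} (ho : ω ^ ((m + 1 : ℕ) : Ordinal) < o) {f : Iio o → W}
    (hf : StrictMono f) : (leftLimitPoints^[m + 1] (range f)).Nonempty :=
  ⟨_, sSup_image_Iio_mem_iterate_leftLimitPoints_range hf m (v := ⟨_, ho⟩)
    (mem_iterate_leftLimitPoints_univ (m + 1) (zero_add _).symm)⟩

theorem countable_Iio_omega0_opow {α : Ordinal} (hα : α.card ≤ Cardinal.aleph0) :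
    Countable (Iio (ω ^ α)) := by
  rw [← Cardinal.mk_le_aleph0_iff, Cardinal.mk_Iio_ordinal, Cardinal.lift_le_aleph0]
  exact (card_opow_le ω α).trans (by simpa using hα)

end Ordinal

section Coloring

open Ordinal

theorem exists_mem_Ioc_padicValNat_eq (p : ℕ) [hp : Fact p.Prime] (d i : ℕ) :
    ∃ k ∈ Ioc d (d + p ^ (i + 1)), padicValNat p k = i := by
  have hlt : p ^ i < p ^ (i + 1) := Nat.pow_lt_pow_succ hp.out.one_lt
  set q := (d + p ^ (i + 1) - p ^ i) / p ^ (i + 1)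
  have hle : p ^ (i + 1) * q ≤ d + p ^ (i + 1) - p ^ i := Nat.mul_div_le _ _
  have hgt : d + p ^ (i + 1) - p ^ i < p ^ (i + 1) * (q + 1) :=
    Nat.lt_mul_div_succ _ (Nat.zero_lt_of_lt hlt)
  rw [Nat.mul_succ] at hgt
  refine ⟨p ^ (i + 1) * q + p ^ i, ⟨by omega, by omega⟩, ?_⟩
  have hndvd : ¬ p ∣ p * q + 1 := fun h =>
    hp.out.one_lt.ne' (Nat.dvd_one.1 ((Nat.dvd_add_right (dvd_mul_right p q)).1 h))
  rw [show p ^ (i + 1) * q + p ^ i = p ^ i * (p * q + 1) by ring,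
    padicValNat.mul (pow_ne_zero i hp.out.ne_zero) (Nat.succ_ne_zero _), padicValNat.prime_pow,
    padicValNat.eq_zero_of_not_dvd hndvd, add_zero]

theorem exists_orderEmbedding_fin_add_two {V : Type*} [Preorder V] [NoMaxOrder V] {x y : V}
    (hxy : x < y) (n : ℕ) : ∃ g : Fin (n + 2) ↪o V, g 0 = x ∧ g 1 = y := by
  obtain ⟨s, hs, rfl⟩ := Nat.exists_strictMono' y
  have hmono : StrictMono (Fin.cons x fun i : Fin (n + 1) => s i : Fin (n + 2) → V) :=
    Fin.strictMono_cons.2 ⟨fun j => hxy.trans_le (hs.monotone j.val.zero_le),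
      hs.comp Fin.val_strictMono⟩
  exact ⟨OrderEmbedding.ofStrictMono _ hmono, rfl, rfl⟩

/-- Galvin's relation `W ↛ [ω, ω², ω², ω³, …]²`, with larger exponents. -/
theorem exists_pair_coloring_forall_strictMono (W : Type*) [ConditionallyCompleteLinearOrder W]
    [Countable W] :
    ∃ χ : W → W → ℕ, ∀ (i : ℕ) (o : Ordinal), ω ^ ((2 ^ (i + 1) + 1 : ℕ) : Ordinal) < o →
      ∀ f : Iio o → W, StrictMono f → ∃ x y, x < y ∧ χ (f x) (f y) = i := by
  obtain ⟨e, he⟩ := Countable.exists_injective_nat W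
  refine ⟨fun x y => padicValNat 2 (oscNumber (recordValues e x) (recordValues e y)),
    fun i o ho f hf => ?_⟩
  obtain ⟨d, hd⟩ := exists_forall_Ioc_oscNumber_eq he _
    (nonempty_iterate_leftLimitPoints_range ho hf)
  obtain ⟨k, hk, hki⟩ := exists_mem_Ioc_padicValNat_eq 2 d i
  obtain ⟨-, ⟨x, rfl⟩, -, ⟨y, rfl⟩, hxy, hosc⟩ := hd k hk
  exact ⟨x, y, hf.lt_iff_lt.1 hxy, (congrArg _ hosc).trans hki⟩

theorem exists_chain_coloring_surjOn (W : Type*) [ConditionallyCompleteLinearOrder W]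
    [Countable W] (n : ℕ) :
    ∃ χ : (Fin (n + 2) ↪o W) → ℕ, ∀ U : Set W, Nonempty (Iio (ω ^ ω) ↪o U) →
      SurjOn χ {f | ∀ i, f i ∈ U} univ := by
  obtain ⟨χ, hχ⟩ := exists_pair_coloring_forall_strictMono W
  refine ⟨fun f => χ (f 0) (f 1), fun U ⟨φ⟩ i _ => ?_⟩
  have : NoMaxOrder (Iio (ω ^ ω)) :=
    (isSuccLimit_opow_left isSuccLimit_omega0 omega0_ne_zero).isSuccPrelimit.noMaxOrder_Iio
  let ψ : Iio (ω ^ ω) ↪o W := φ.trans (OrderEmbedding.subtype (· ∈ U))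
  obtain ⟨x, y, hxy, hi⟩ := hχ i (ω ^ ω)
    ((opow_lt_opow_iff_right one_lt_omega0).2 (natCast_lt_omega0 _)) _
    ψ.strictMono
  obtain ⟨g, rfl, rfl⟩ := exists_orderEmbedding_fin_add_two hxy n
  exact ⟨g.trans ψ, fun j => (φ (g j)).2, hi⟩

theorem stmt17_general (W : Type*) [ConditionallyCompleteLinearOrder W] [Countable W] {n : ℕ}
    (hn : 2 ≤ n) (t : ℕ) :
    ∃ k : ℕ, 2 ≤ k ∧ ∃ χ : (Fin n ↪o W) → Fin k,
      ∀ U : Set W, Nonempty (Iio (ω ^ ω) ↪o U) → t ≤ (χ '' {f | ∀ i, f i ∈ U}).ncard := by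
  obtain ⟨n, rfl⟩ := Nat.exists_eq_add_of_le' hn
  obtain ⟨χ, hχ⟩ := exists_chain_coloring_surjOn W n
  refine ⟨t + 2, Nat.le_add_left 2 t, fun f => Fin.ofNat (t + 2) (χ f), fun U hU => ?_⟩
  have hsurj : (fun f => Fin.ofNat (t + 2) (χ f)) '' {f | ∀ i, f i ∈ U} = Set.univ := by
    refine eq_univ_of_forall fun c => ?_
    obtain ⟨f, hf, hfc⟩ := hχ U hU (mem_univ c.val)
    exact ⟨f, hf, by simp [hfc]⟩
  rw [hsurj, ncard_univ, Nat.card_fin]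
  exact Nat.le_add_right t 2

end Coloring

/-- `T(n, ω^α) = ∞` for every `2 ≤ n < ω` and every countable ordinal `α ≥ ω`:
for every `t` there are `k ≥ 2` and a `k`-coloring of the `n`-element subchains of `ω^α`
such that every subchain of `ω^α` order-isomorphic to `ω^α` attains at least `t` colors. -/
theorem stmt17 (n : ℕ) (hn : 2 ≤ n) (α : Ordinal)
    (hα : Ordinal.omega0 ≤ α) (hcnt : α.card ≤ Cardinal.aleph0) (t : ℕ) :
    ∃ k : ℕ, 2 ≤ k ∧ ∃ χ : (Fin n ↪o ↥(Set.Iio (Ordinal.omega0 ^ α))) → Fin k,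
      ∀ U : Set ↥(Set.Iio (Ordinal.omega0 ^ α)),
        Nonempty (U ≃o ↥(Set.Iio (Ordinal.omega0 ^ α))) →
          t ≤ (χ '' {f | ∀ i, f i ∈ U}).ncard := by
  have := countable_Iio_omega0_opow hcnt
  have : Inhabited (Iio (Ordinal.omega0 ^ α)) := ⟨0, Ordinal.opow_pos α Ordinal.omega0_pos⟩
  obtain ⟨k, hk, χ, hχ⟩ := stmt17_general (Iio (Ordinal.omega0 ^ α)) hn t
  refine ⟨k, hk, χ, fun U ⟨φ⟩ => hχ U ⟨?_⟩⟩
  exact (Subtype.orderEmbedding fun _ hβ =>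
    lt_of_lt_of_le hβ (Ordinal.opow_le_opow_right Ordinal.omega0_pos hα)).trans
      φ.symm.toOrderEmbedding
end

section
/- Let α be a countable ordinal. Then α has finite big Ramsey degrees (T(n, α) < ∞ for all n ≥ 1) if and only if α < ω^ω. Moreover, if α ≥ ω^ω then T(n, α) = ∞ for all 2 ≤ n < ω. -/
open Set

/-!
Negative part: the elements of a countable well-order can be coded by finite sets of natural numbers
so that the codes of every subset of order type at least `ω ^ m` contain the leaves of a tree of
height `m`, each of whose nodes is extended by blocks lying arbitrarily far out. Walking up two
branches of such a tree with alternating blocks gives two leaves that alternate exactly `m` times.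
Hence in every copy of an ordinal `α ≥ ω ^ ω` the number of alternations of pairs takes every
positive value, and no finite bound on the number of colours is possible.

Positive part: by the Cantor normal form an element of `α < ω ^ ω` is described by one of finitely
many labels together with a set of natural numbers of bounded size `D`, and the elements whose set
is contained in a prescribed infinite set `H` still include a copy of `α`. Ramsey's theorem for sets
of size `n * D` provides an `H` for which the colour of an `n`-chain depends only on the labels and
the relative position of the sets describing its elements.
-/

section IsLarge

variable {C D ι : Type*} [LinearOrder C] [LinearOrder D]

/-- For a set `A` of ordinals this says that `A` has order type at least `ω ^ m`. The recursive form
makes sense in every linear order and refers to the order of `C` only. -/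
def IsLarge : ℕ → Set C → Prop
  | 0, A => A.Nonempty
  | m + 1, A => ∃ g : ℕ → Set C, (∀ i, g i ⊆ A ∧ IsLarge m (g i)) ∧
      ∀ i j, i < j → ∀ x ∈ g i, ∀ y ∈ g j, x < y

theorem IsLarge.mono {m : ℕ} {A B : Set C} (hA : IsLarge m A) (hAB : A ⊆ B) : IsLarge m B := by
  cases m with
  | zero => exact Set.Nonempty.mono hAB hA
  | succ m =>
    obtain ⟨g, hg, hlt⟩ := hA
    exact ⟨g, fun i => ⟨(hg i).1.trans hAB, (hg i).2⟩, hlt⟩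

theorem IsLarge.nonempty {m : ℕ} {A : Set C} (hA : IsLarge m A) : A.Nonempty := by
  induction m generalizing A with
  | zero => exact hA
  | succ m ih =>
    obtain ⟨g, hg, -⟩ := hA
    exact (ih (hg 0).2).mono (hg 0).1

theorem IsLarge.nontrivial {m : ℕ} {A : Set C} (hA : IsLarge (m + 1) A) : A.Nontrivial := by
  obtain ⟨g, hg, hlt⟩ := hA
  obtain ⟨x, hx⟩ := (hg 0).2.nonempty
  obtain ⟨y, hy⟩ := (hg 1).2.nonempty
  exact ⟨x, (hg 0).1 hx, y, (hg 1).1 hy, (hlt 0 1 zero_lt_one x hx y hy).ne⟩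

theorem isLarge_union {m : ℕ} {A B : Set C} :
    IsLarge m (A ∪ B) ↔ IsLarge m A ∨ IsLarge m B := by
  refine ⟨fun h => ?_, fun h => h.elim (·.mono subset_union_left) (·.mono subset_union_right)⟩
  induction m generalizing A B with
  | zero => exact union_nonempty.1 h
  | succ m ih =>
    obtain ⟨g, hg, hlt⟩ := h
    have of_frequently (E : Set C) (hE : ∃ᶠ i in Filter.atTop, IsLarge m (g i ∩ E)) :
        IsLarge (m + 1) E := by
      obtain ⟨φ, hφ, hL⟩ := Filter.extraction_of_frequently_atTop hE
      exact ⟨fun i => g (φ i) ∩ E, fun i => ⟨inter_subset_right, hL i⟩,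
        fun i j hij x hx y hy => hlt _ _ (hφ hij) x hx.1 y hy.1⟩
    have hor (i : ℕ) : IsLarge m (g i ∩ A) ∨ IsLarge m (g i ∩ B) :=
      ih (by rw [← inter_union_distrib_left, inter_eq_left.2 (hg i).1]; exact (hg i).2)
    exact (Filter.frequently_or_distrib.1 (Filter.Frequently.of_forall hor)).imp
      (of_frequently A) (of_frequently B)

theorem IsLarge.exists_fiber {m : ℕ} {A : Set C} (hA : IsLarge m A) {ν : C → ι}
    (hν : (ν '' A).Finite) : ∃ k, IsLarge m (A ∩ ν ⁻¹' {k}) := by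
  generalize hT : ν '' A = T at hν
  induction T, hν using Set.Finite.induction_on generalizing A with
  | empty => exact absurd hT (hA.nonempty.image ν).ne_empty
  | @insert k T _ _ ih =>
    have hsplit : A = A ∩ ν ⁻¹' {k} ∪ A ∩ ν ⁻¹' T := by
      rw [← inter_union_distrib_left, ← preimage_union, singleton_union, ← hT,
        inter_eq_left.2 (subset_preimage_image ν A)]
    rw [hsplit, isLarge_union] at hA
    rcases hA with hA | hA
    · exact ⟨k, hA⟩
    · have himage : ν '' (A ∩ ν ⁻¹' T) = T := by
        rw [image_inter_preimage, hT, inter_eq_right.2 (subset_insert k T)]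
      obtain ⟨l, hl⟩ := ih hA himage
      exact ⟨l, hl.mono (inter_subset_inter_left _ inter_subset_left)⟩

theorem isLarge_image {m : ℕ} {A : Set C} (f : C ↪o D) : IsLarge m (f '' A) ↔ IsLarge m A := by
  induction m generalizing A with
  | zero => exact image_nonempty
  | succ m ih =>
    constructor
    · rintro ⟨g, hg, hlt⟩
      have hpre (i : ℕ) : f '' (f ⁻¹' g i) = g i :=
        image_preimage_eq_of_subset ((hg i).1.trans (image_subset_range f A))
      refine ⟨fun i => f ⁻¹' g i, fun i => ⟨?_, ?_⟩, fun i j hij x hx y hy =>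
        f.lt_iff_lt.1 (hlt i j hij _ hx _ hy)⟩
      · rw [← image_subset_image_iff f.injective, hpre]
        exact (hg i).1
      · rw [← ih, hpre]
        exact (hg i).2
    · rintro ⟨g, hg, hlt⟩
      refine ⟨fun i => f '' g i, fun i => ⟨image_mono (hg i).1, ih.2 (hg i).2⟩, ?_⟩
      rintro i j hij _ ⟨x, hx, rfl⟩ _ ⟨y, hy, rfl⟩
      exact f.lt_iff_lt.2 (hlt i j hij x hx y hy)

theorem IsLarge.of_orderIso {m : ℕ} {U : Set C} (e : U ≃o D)
    (hD : IsLarge m (univ : Set D)) : IsLarge m U := by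
  have hU : U = (e.symm.toOrderEmbedding.trans (OrderEmbedding.subtype (· ∈ U))) '' univ := by
    ext x
    simp
  rwa [hU, isLarge_image]

theorem IsLarge.exists_orderEmbedding {m : ℕ} {A : Set C} {R : C → C → Prop}
    (hA : IsLarge (m + 1) A) (hR : ∀ B, IsLarge m B → ∃ x ∈ B, ∃ y ∈ B, x < y ∧ R x y) :
    ∃ h : ℕ ↪o C, (∀ i, h i ∈ A) ∧ R (h 0) (h 1) := by
  obtain ⟨g, hg, hlt⟩ := hA
  obtain ⟨x, hx, y, hy, hxy, hRxy⟩ := hR (g 0) (hg 0).2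
  choose z hz using fun i => (hg i).2.nonempty
  let h : ℕ → C
    | 0 => x
    | 1 => y
    | i + 2 => z (i + 1)
  have hmono : StrictMono h := strictMono_nat_of_lt_succ fun
    | 0 => hxy
    | 1 => hlt 0 1 zero_lt_one y hy _ (hz 1)
    | i + 2 => hlt (i + 1) (i + 2) (Nat.lt_succ_self _) _ (hz _) _ (hz _)
  exact ⟨OrderEmbedding.ofStrictMono h hmono, fun
    | 0 => (hg 0).1 hx
    | 1 => (hg 0).1 hy
    | i + 2 => (hg (i + 1)).1 (hz (i + 1)), hRxy⟩

end IsLarge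

section Branching

variable {m n : ℕ} {s d : Finset ℕ} {𝓕 𝓖 : Set (Finset ℕ)}

/-- `s` is the root of a tree of height `m` of finite sets, ordered by end-extension, whose leaves
belong to `𝓕` and in which every node has successors obtained by adding only arbitrarily large
elements. -/
def IsBranching : ℕ → Finset ℕ → Set (Finset ℕ) → Prop
  | 0, s, 𝓕 => s ∈ 𝓕
  | m + 1, s, 𝓕 => ∀ N, ∃ d : Finset ℕ, d.Nonempty ∧ (∀ a ∈ d, N < a) ∧ IsBranching m (s ∪ d) 𝓕

theorem IsBranching.mono (h : IsBranching m s 𝓕) (h𝓕 : 𝓕 ⊆ 𝓖) : IsBranching m s 𝓖 := by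
  induction m generalizing s with
  | zero => exact h𝓕 h
  | succ m ih =>
    intro N
    obtain ⟨d, hd, hN, hm⟩ := h N
    exact ⟨d, hd, hN, ih hm⟩

/-- The set whose increasing enumeration is `n` followed by that of `s` translated by `n + 1`: it
codes the pair `(n, s)`. -/
def shiftInsert (n : ℕ) (s : Finset ℕ) : Finset ℕ := insert n (s.image (· + (n + 1)))

theorem shiftInsert_nonempty : (shiftInsert n s).Nonempty := Finset.insert_nonempty _ _

theorem le_of_mem_shiftInsert {a : ℕ} (ha : a ∈ shiftInsert n s) : n ≤ a := by
  simp only [shiftInsert, Finset.mem_insert, Finset.mem_image] at ha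
  omega

theorem shiftInsert_union :
    shiftInsert n (s ∪ d) = shiftInsert n s ∪ d.image (· + (n + 1)) := by
  simp only [shiftInsert, Finset.image_union, Finset.insert_union]

theorem IsBranching.shiftInsert (h : IsBranching m s 𝓕) :
    IsBranching m (shiftInsert n s) (shiftInsert n '' 𝓕) := by
  induction m generalizing s with
  | zero => exact mem_image_of_mem _ h
  | succ m ih =>
    intro N
    obtain ⟨d, hd, hN, hm⟩ := h N
    refine ⟨d.image (· + (n + 1)), hd.image _, ?_, ?_⟩
    · rw [Finset.forall_mem_image]
      exact fun a ha => (hN a ha).trans_le (Nat.le_add_right a _)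
    · rw [← shiftInsert_union]
      exact ih hm

end Branching

section IsBranchingCode

variable {C : Type*} [LinearOrder C] {F : C → Finset ℕ} {D E : Set C}

/-- `F` codes the elements of `D` by finite sets of natural numbers in such a way that the codes of
a large set contain the leaves of a branching tree of the same rank. -/
def IsBranchingCode (F : C → Finset ℕ) (D : Set C) : Prop :=
  ∀ m, ∀ A ⊆ D, IsLarge m A → ∃ s, IsBranching m s (F '' A)

theorem IsBranchingCode.subset (hF : IsBranchingCode F E) (hDE : D ⊆ E) : IsBranchingCode F D :=
  fun m A hA => hF m A (hA.trans hDE)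

theorem IsBranchingCode.insert (hF : IsBranchingCode F D) (x : C) :
    IsBranchingCode F (insert x D) := by
  intro m A hA hm
  cases m with
  | zero => exact hm.nonempty.image _
  | succ m =>
    have hsplit : A = A ∩ {x} ∪ A ∩ D := by
      rw [← inter_union_distrib_left, singleton_union, inter_eq_left.2 hA]
    rw [hsplit, isLarge_union] at hm
    rcases hm with hm | hm
    · exact absurd (hm.nontrivial.mono inter_subset_right) not_nontrivial_singleton
    · obtain ⟨s, hs⟩ := hF _ _ inter_subset_right hm
      exact ⟨s, hs.mono (image_mono inter_subset_left)⟩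

theorem IsLarge.exists_fiber_of_le {m : ℕ} {A : Set C} {ν : C → ℕ} {x y : C}
    (hA : IsLarge m A) (hAD : A ⊆ D) (hν : MonotoneOn ν D) (hx : x ∈ D) (hy : y ∈ D)
    (hxA : ∀ z ∈ A, x ≤ z) (hAy : ∀ z ∈ A, z ≤ y) :
    ∃ k ≥ ν x, IsLarge m (A ∩ ν ⁻¹' {k}) := by
  have hfin : (ν '' A).Finite := (finite_Iic (ν y)).subset <| image_subset_iff.2 fun z hz =>
    hν (hAD hz) hy (hAy z hz)
  obtain ⟨k, hk⟩ := hA.exists_fiber hfin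
  obtain ⟨z, hz, rfl⟩ := hk.nonempty
  exact ⟨ν z, hν hx (hAD hz) (hxA z hz), hk⟩

/-- The code of `x` that records first the index `ν x` and then the code of `x` in the family
chosen for that index. -/
def gluedCode (ν : C → ℕ) (F : ℕ → C → Finset ℕ) (x : C) : Finset ℕ :=
  shiftInsert (ν x) (F (ν x) x)

theorem exists_isBranching_gluedCode {ν : C → ℕ} {F : ℕ → C → Finset ℕ} {k m : ℕ} {A : Set C}
    (hF : IsBranchingCode (F k) (D ∩ ν ⁻¹' {k})) (hAD : A ⊆ D) (hA : IsLarge m (A ∩ ν ⁻¹' {k})) :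
    ∃ s, IsBranching m (shiftInsert k s) (gluedCode ν F '' A) := by
  obtain ⟨s, hs⟩ := hF m _ (inter_subset_inter_left _ hAD) hA
  refine ⟨s, hs.shiftInsert.mono ?_⟩
  rintro _ ⟨_, ⟨x, ⟨hx, rfl⟩, rfl⟩, rfl⟩
  exact ⟨x, hx, rfl⟩

-- On a large set, `ν` either is constant on a large subset, or it is unbounded along the pieces
-- `g i`; in the latter case monotonicity bounds `ν` on each piece, so that the index `k` recorded
-- first by the code of some piece exceeds any given `N`.
theorem IsBranchingCode.glue {ν : C → ℕ} {F : ℕ → C → Finset ℕ} (hν : MonotoneOn ν D)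
    (hF : ∀ k, IsBranchingCode (F k) (D ∩ ν ⁻¹' {k})) : IsBranchingCode (gluedCode ν F) D := by
  intro m A hAD hA
  cases m with
  | zero => exact hA.nonempty.image _
  | succ m =>
    obtain ⟨g, hg, hlt⟩ := hA
    have hgD (i : ℕ) : g i ⊆ D := (hg i).1.trans hAD
    by_cases hfin : (ν '' ⋃ i, g i).Finite
    · have hL : IsLarge (m + 1) (⋃ i, g i) :=
        ⟨g, fun i => ⟨subset_iUnion g i, (hg i).2⟩, hlt⟩
      obtain ⟨k, hk⟩ := hL.exists_fiber hfin
      obtain ⟨s, hs⟩ := exists_isBranching_gluedCode (hF k) (iUnion_subset hgD) hk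
      exact ⟨_, hs.mono (image_mono (iUnion_subset fun i => (hg i).1))⟩
    · refine ⟨∅, fun N => ?_⟩
      obtain ⟨_, ⟨x, hxg, rfl⟩, hN⟩ := Set.Infinite.exists_gt hfin N
      obtain ⟨i, hx⟩ := mem_iUnion.1 hxg
      obtain ⟨y, hy⟩ := (hg (i + 2)).2.nonempty
      obtain ⟨k, hxk, hk⟩ := (hg (i + 1)).2.exists_fiber_of_le (hgD _) hν (hgD _ hx) (hgD _ hy)
        (fun z hz => (hlt _ _ (by omega) x hx z hz).le)
        (fun z hz => (hlt _ _ (by omega) z hz y hy).le)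
      obtain ⟨s, hs⟩ := exists_isBranching_gluedCode (hF k) (hgD _) hk
      refine ⟨shiftInsert k s, shiftInsert_nonempty,
        fun a ha => hN.trans_le (hxk.trans (le_of_mem_shiftInsert ha)), ?_⟩
      rw [Finset.empty_union]
      exact hs.mono (image_mono (hg (i + 1)).1)

theorem exists_isBranchingCode_of_forall_Iic (hD : D.Countable)
    (h : ∀ x ∈ D, ∃ F : C → Finset ℕ, IsBranchingCode F (Iic x)) :
    ∃ F : C → Finset ℕ, IsBranchingCode F D := by
  rcases D.eq_empty_or_nonempty with rfl | hne
  · exact ⟨fun _ => ∅, fun m A hA hm => absurd (hm.nonempty.mono hA) not_nonempty_empty⟩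
  obtain ⟨e, rfl⟩ := hD.exists_eq_range hne
  choose F hF using fun k => h (e k) (mem_range_self k)
  have hex (x : C) (hx : x ∈ range e) : {k | x ≤ e k}.Nonempty := hx.imp fun _ hk => hk.ge
  refine ⟨gluedCode (fun x => sInf {k | x ≤ e k}) F, .glue ?_ fun k => (hF k).subset ?_⟩
  · exact fun x _ y hy hxy =>
      csInf_le_csInf (OrderBot.bddBelow _) (hex y hy) fun k hk => hxy.trans hk
  · rintro x ⟨hx, rfl⟩
    exact Nat.sInf_mem (hex x hx)

theorem exists_isBranchingCode_univ (C : Type*) [LinearOrder C] [WellFoundedLT C] [Countable C] :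
    ∃ F : C → Finset ℕ, IsBranchingCode F univ := by
  refine exists_isBranchingCode_of_forall_Iic countable_univ fun x _ => ?_
  induction x using WellFoundedLT.induction with
  | ind x ih =>
    obtain ⟨F, hF⟩ := exists_isBranchingCode_of_forall_Iic (to_countable (Iio x))
      fun y hy => ih y hy (mem_univ y)
    exact ⟨F, Iio_insert (a := x) ▸ hF.insert x⟩

end IsBranchingCode

section Switches

/-- The elements of `s \ u` whose successor in `s ∪ u` belongs to `u`. Their number is an
oscillation count in the sense of Todorcevic. -/
def switches {ι : Type*} [LinearOrder ι] (s u : Finset ι) : Finset ι :=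
  {n ∈ s | n ∉ u ∧ ∃ m ∈ u, n < m ∧ ∀ p ∈ s, p ≤ n ∨ m ≤ p}

variable {ι : Type*} [LinearOrder ι]

theorem switches_self (s : Finset ι) : switches s s = ∅ :=
  Finset.filter_eq_empty_iff.2 fun _ hn h => h.1 hn

theorem switches_union {s u d e : Finset ι} (hd : d.Nonempty) (he : e.Nonempty)
    (hsd : ∀ a ∈ s, ∀ b ∈ d, a < b) (hud : ∀ a ∈ u, ∀ b ∈ d, a < b)
    (hde : ∀ a ∈ d, ∀ b ∈ e, a < b) :
    switches (s ∪ d) (u ∪ e) = insert (d.max' hd) (switches s u) := by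
  have hmax := d.max'_mem hd
  have hle := d.le_max'
  obtain ⟨c, hc⟩ := he
  ext n
  simp only [switches, Finset.mem_filter, Finset.mem_union, Finset.mem_insert]
  constructor <;> grind

theorem card_switches_union {s u d e : Finset ι} (hd : d.Nonempty) (he : e.Nonempty)
    (hsd : ∀ a ∈ s, ∀ b ∈ d, a < b) (hud : ∀ a ∈ u, ∀ b ∈ d, a < b)
    (hde : ∀ a ∈ d, ∀ b ∈ e, a < b) :
    (switches (s ∪ d) (u ∪ e)).card = (switches s u).card + 1 := by
  rw [switches_union hd he hsd hud hde, Finset.card_insert_of_notMem]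
  exact fun h => (hsd _ (Finset.mem_filter.1 h).1 _ (d.max'_mem hd)).false

theorem IsBranching.exists_card_switches {m : ℕ} {s u : Finset ℕ} {𝓕 𝓖 : Set (Finset ℕ)}
    (hs : IsBranching m s 𝓕) (hu : IsBranching m u 𝓖) :
    ∃ a ∈ 𝓕, ∃ b ∈ 𝓖, (switches a b).card = (switches s u).card + m := by
  induction m generalizing s u with
  | zero => exact ⟨s, hs, u, hu, rfl⟩
  | succ m ih =>
    obtain ⟨M, hM⟩ := (s ∪ u).exists_le
    obtain ⟨d, hd, hMd, hsd⟩ := hs M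
    obtain ⟨N, hN⟩ := d.exists_le
    obtain ⟨e, he, hNe, hue⟩ := hu N
    obtain ⟨a, ha, b, hb, hab⟩ := ih hsd hue
    refine ⟨a, ha, b, hb, ?_⟩
    rw [hab, card_switches_union hd he, add_assoc, add_comm 1 m]
    · exact fun i hi j hj => (hM i (Finset.mem_union_left u hi)).trans_lt (hMd j hj)
    · exact fun i hi j hj => (hM i (Finset.mem_union_right s hi)).trans_lt (hMd j hj)
    · exact fun i hi j hj => (hN i hi).trans_lt (hNe j hj)

theorem exists_code_card_switches (C : Type*) [LinearOrder C] [WellFoundedLT C] [Countable C] :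
    ∃ F : C → Finset ℕ, ∀ m (A : Set C), IsLarge m A →
      ∃ x ∈ A, ∃ y ∈ A, (switches (F x) (F y)).card = m := by
  obtain ⟨F, hF⟩ := exists_isBranchingCode_univ C
  refine ⟨F, fun m A hA => ?_⟩
  obtain ⟨s, hs⟩ := hF m A (subset_univ A) hA
  obtain ⟨_, ⟨x, hx, rfl⟩, _, ⟨y, hy, rfl⟩, hxy⟩ := hs.exists_card_switches hs
  refine ⟨x, hx, y, hy, ?_⟩
  rw [hxy, switches_self, Finset.card_empty, zero_add]

end Switches

section NotBrdLE

variable {C ι : Type*} [LinearOrder C] {n t : ℕ}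

theorem brdLE.exists_ncard_image_le {K : Type*} [Finite K] (h : brdLE C n t)
    (χ : (Fin n ↪o C) → K) :
    ∃ U : Set C, Nonempty (U ≃o C) ∧ (χ '' {f | ∀ i, f i ∈ U}).ncard ≤ t := by
  let c : K ↪ Fin (Nat.card K + 2) :=
    (Finite.equivFin K).toEmbedding.trans (Fin.castAddEmb 2)
  obtain ⟨U, hU, hcard⟩ := h _ (Nat.le_add_left 2 _) (c ∘ χ)
  rw [image_comp, ncard_image_of_injective _ c.injective] at hcard
  exact ⟨U, hU, hcard⟩

theorem not_brdLE_of_forall_exists_mem {G : (Fin n ↪o C) → Finset ι} {S : Set ι} {b : ℕ}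
    (hS : S.Infinite) (hGcard : ∀ f, (G f).card ≤ b)
    (hG : ∀ U : Set C, Nonempty (U ≃o C) → ∀ j ∈ S, ∃ f, (∀ i, f i ∈ U) ∧ j ∈ G f) :
    ¬ brdLE C n t := by
  classical
  intro h
  obtain ⟨K, hKS, hKcard⟩ := hS.exists_subset_card_eq (t * b + 1)
  let χ (f : Fin n ↪o C) : K.powerset := ⟨G f ∩ K, Finset.mem_powerset.2 Finset.inter_subset_right⟩
  obtain ⟨U, hU, ht⟩ := h.exists_ncard_image_le χ
  have hfin := toFinite (χ '' {f | ∀ i, f i ∈ U})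
  rw [ncard_eq_toFinset_card _ hfin] at ht
  have hcover : K ⊆ hfin.toFinset.biUnion Subtype.val := by
    intro j hj
    obtain ⟨f, hfU, hjf⟩ := hG U hU j (hKS hj)
    exact Finset.mem_biUnion.2 ⟨χ f, hfin.mem_toFinset.2 (mem_image_of_mem χ hfU),
      Finset.mem_inter.2 ⟨hjf, hj⟩⟩
  have hbound : ∀ a ∈ hfin.toFinset, a.1.card ≤ b := by
    intro a ha
    obtain ⟨f, -, rfl⟩ := hfin.mem_toFinset.1 ha
    exact (Finset.card_le_card Finset.inter_subset_left).trans (hGcard f)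
  have hK := (Finset.card_le_card hcover).trans (Finset.card_biUnion_le_card_mul _ _ b hbound)
  have htb := Nat.mul_le_mul_right b ht
  omega

theorem not_brdLE_of_forall_isLarge [WellFoundedLT C] [Countable C]
    (hC : ∀ m, IsLarge m (univ : Set C)) (hn : 2 ≤ n) : ¬ brdLE C n t := by
  obtain ⟨n, rfl⟩ := Nat.exists_eq_add_of_le' hn
  obtain ⟨F, hF⟩ := exists_code_card_switches C
  let G (x y : C) : Finset ℕ := {(switches (F x) (F y)).card, (switches (F y) (F x)).card}
  have hpair (j : ℕ) (hj : j ≠ 0) (B : Set C) (hB : IsLarge j B) :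
      ∃ x ∈ B, ∃ y ∈ B, x < y ∧ j ∈ G x y := by
    obtain ⟨x, hx, y, hy, rfl⟩ := hF j B hB
    rcases lt_trichotomy x y with hxy | rfl | hyx
    · exact ⟨x, hx, y, hy, hxy, Finset.mem_insert_self _ _⟩
    · simp [switches_self] at hj
    · exact ⟨y, hy, x, hx, hyx, Finset.mem_insert_of_mem (Finset.mem_singleton_self _)⟩
  refine not_brdLE_of_forall_exists_mem (G := fun f => G (f 0) (f 1)) (Ioi_infinite 0)
    (fun f => Finset.card_le_two) ?_
  rintro U ⟨e⟩ j hj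
  obtain ⟨h, hU, hj⟩ := (IsLarge.of_orderIso e (hC (j + 1))).exists_orderEmbedding
    (hpair j (ne_of_gt hj))
  exact ⟨(Fin.valOrderEmb (n + 2)).trans h, fun i => hU i, hj⟩

end NotBrdLE

section Ramsey

open Filter

variable {α K : Type*} {l : ℕ → Finset α → K} {N : ℕ} {κ : K}

theorem exists_iterated_limits [Infinite α] [DecidableEq α] [Finite K] (c : Finset α → K) :
    ∃ l : ℕ → Finset α → K, l 0 = c ∧
      ∀ i S, ∀ᶠ x in (hyperfilter α : Filter α), l i (insert x S) = l (i + 1) S := by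
  have hlim (f : α → K) : ∃ κ, ∀ᶠ x in (hyperfilter α : Filter α), f x = κ :=
    Ultrafilter.eventually_exists_iff.1 (Eventually.of_forall fun x => ⟨f x, rfl⟩)
  choose lim hlim using hlim
  refine ⟨fun i => (fun d S => lim fun x => d (insert x S))^[i] c, rfl, fun i S => ?_⟩
  simp only [Function.iterate_succ_apply']
  exact hlim _

/-- The finite subsets `S` of `H` with `S.card + i = N` all have colour `κ` in the colouring `l i`.
For the iterated limits `l` of a colouring, this strengthening of homogeneity can be preserved when
a point is added to `H`. -/
def IsLimitHomogeneous (l : ℕ → Finset α → K) (N : ℕ) (κ : K) (H : Set α) : Prop :=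
  ∀ S : Finset α, ↑S ⊆ H → ∀ i, S.card + i = N → l i S = κ

theorem isLimitHomogeneous_empty : IsLimitHomogeneous l N (l N ∅) ∅ := by
  rintro S hS i rfl
  rw [Finset.coe_eq_empty.1 (subset_empty_iff.1 hS), Finset.card_empty, zero_add]

theorem isOfFiniteCharacter_isLimitHomogeneous :
    Order.IsOfFiniteCharacter {H | IsLimitHomogeneous l N κ H} :=
  fun _ => ⟨fun hH _ hG _ S hS => hH S (hS.trans hG),
    fun h S hS => h S hS S.finite_toSet S Subset.rfl⟩

theorem IsLimitHomogeneous.eventually_insert [Infinite α] [DecidableEq α] {H : Set α}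
    (hl : ∀ i S, ∀ᶠ x in (hyperfilter α : Filter α), l i (insert x S) = l (i + 1) S)
    (hfin : H.Finite) (hH : IsLimitHomogeneous l N κ H) :
    ∀ᶠ x in (hyperfilter α : Filter α), IsLimitHomogeneous l N κ (insert x H) := by
  lift H to Finset α using hfin
  have hlim : ∀ᶠ x in (hyperfilter α : Filter α), ∀ S ∈ H.powerset, ∀ i ∈ Finset.range N,
      l i (insert x S) = l (i + 1) S := by
    simp only [eventually_all_finset]
    exact fun S _ i _ => hl i S
  filter_upwards [hlim] with x hx S hS i hi
  by_cases hxS : x ∈ S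
  · have hcard := Finset.card_erase_add_one hxS
    have hsub : S.erase x ⊆ H := by
      rwa [← Finset.subset_insert_iff, ← Finset.coe_subset, Finset.coe_insert]
    rw [← Finset.insert_erase hxS,
      hx _ (Finset.mem_powerset.2 hsub) i (Finset.mem_range.2 (by omega))]
    exact hH _ (Finset.coe_subset.2 hsub) _ (by omega)
  · exact hH S ((subset_insert_iff_of_notMem hxS).1 hS) i hi

theorem exists_infinite_homogeneous [Infinite α] [Finite K] (N : ℕ) (c : Finset α → K) :
    ∃ H : Set α, H.Infinite ∧ ∃ κ, ∀ S : Finset α, ↑S ⊆ H → S.card = N → c S = κ := by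
  classical
  obtain ⟨l, rfl, hl⟩ := exists_iterated_limits c
  obtain ⟨H, -, hH, hmax⟩ :=
    isOfFiniteCharacter_isLimitHomogeneous.exists_maximal (isLimitHomogeneous_empty (l := l))
  refine ⟨H, fun hfin => ?_, l N ∅, fun S hS hcard => hH S hS 0 hcard⟩
  obtain ⟨x, hx, hxH⟩ := ((hH.eventually_insert hl hfin).and
    (compl_mem_hyperfilter_of_finite hfin)).exists
  exact hxH (hmax hx (subset_insert x H) (mem_insert x H))

end Ramsey

section FinitelyCoded

variable {C J K : Type*} {n D N : ℕ} {H : Set ℕ}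

/-- The elements with a code `(j, s)` in which `s` is a subset of `H` of size at most `D`; `p` is
the decoding map. -/
def codedSet (p : J → Finset ℕ → C) (D : ℕ) (H : Set ℕ) : Set C :=
  {x | ∃ j s, ↑s ⊆ H ∧ s.card ≤ D ∧ p j s = x}

/-- The `n`-tuple whose `i`-th entry has the code `(j, s)` where `σ i = (j, P)` and `P` lists the
positions of the elements of `s` in the increasing enumeration of `S`. -/
noncomputable def realize (p : J → Finset ℕ → C) (S : Finset ℕ)
    (σ : Fin n → J × Finset (Fin N)) (i : Fin n) : C :=
  p (σ i).1 ((σ i).2.image fun a : Fin N => Nat.nth (· ∈ S) a)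

theorem exists_image_nth_eq {s S : Finset ℕ} (hsS : s ⊆ S) :
    ∃ P : Finset (Fin S.card), P.image (fun a : Fin S.card => Nat.nth (· ∈ S) a) = s := by
  have hs : s ⊆ Finset.univ.image fun a : Fin S.card => Nat.nth (· ∈ S) a := by
    intro x hx
    obtain ⟨a, ha, rfl⟩ := Nat.exists_lt_card_finite_nth_eq S.finite_toSet (hsS hx)
    rw [Finset.finite_toSet_toFinset] at ha
    exact Finset.mem_image_of_mem _ (Finset.mem_univ (⟨a, ha⟩ : Fin S.card))
  obtain ⟨P, -, hP⟩ := Finset.subset_image_iff.1 hs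
  exact ⟨P, hP⟩

theorem exists_finset_superset_card_eq {α : Type*} {s : Finset α} {H : Set α} {k : ℕ}
    (hH : H.Infinite) (hsH : ↑s ⊆ H) (hsk : s.card ≤ k) :
    ∃ S : Finset α, s ⊆ S ∧ ↑S ⊆ H ∧ S.card = k := by
  obtain ⟨S, hsS, hSH, hS⟩ := exists_superset_subset_encard_eq (k := k) hsH
    (by rw [encard_coe_eq_coe_finsetCard]; exact_mod_cast hsk) (hH.encard_eq ▸ le_top)
  lift S to Finset α using finite_of_encard_eq_coe hS
  rw [encard_coe_eq_coe_finsetCard] at hS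
  exact ⟨S, Finset.coe_subset.1 hsS, hSH, by exact_mod_cast hS⟩

theorem exists_realize_eq {p : J → Finset ℕ → C} (hH : H.Infinite) {f : Fin n → C}
    (hf : ∀ i, f i ∈ codedSet p D H) :
    ∃ S : Finset ℕ, ↑S ⊆ H ∧ S.card = n * D ∧
      ∃ σ : Fin n → J × Finset (Fin (n * D)), realize p S σ = f := by
  choose j s hsH hsD hf using hf
  have hcard : (Finset.univ.biUnion s).card ≤ n * D := by
    simpa using Finset.card_biUnion_le_card_mul Finset.univ s D fun i _ => hsD i
  have hsub : ↑(Finset.univ.biUnion s) ⊆ H := by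
    simpa using hsH
  obtain ⟨S, hsS, hSH, hS⟩ := exists_finset_superset_card_eq hH hsub hcard
  choose P hP using fun i => exists_image_nth_eq
    ((Finset.subset_biUnion_of_mem s (Finset.mem_univ i)).trans hsS)
  rw [← hS]
  refine ⟨S, hSH, rfl, fun i => (j i, P i), funext fun i => ?_⟩
  rw [realize, hP, hf]

theorem exists_ncard_image_codedSet_le [LinearOrder C] [Finite J] [Finite K] [Nonempty K]
    (p : J → Finset ℕ → C) (D : ℕ) (χ : (Fin n ↪o C) → K) :
    ∃ H : Set ℕ, H.Infinite ∧ (χ '' {f | ∀ i, f i ∈ codedSet p D H}).ncard ≤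
      Nat.card (Fin n → J × Finset (Fin (n * D))) := by
  let c (S : Finset ℕ) (σ : Fin n → J × Finset (Fin (n * D))) : K :=
    Function.extend DFunLike.coe χ (fun _ => Classical.arbitrary K) (realize p S σ)
  obtain ⟨H, hH, κ, hκ⟩ := exists_infinite_homogeneous (n * D) c
  refine ⟨H, hH, ?_⟩
  have hsub : χ '' {f | ∀ i, f i ∈ codedSet p D H} ⊆ range κ := by
    rintro _ ⟨f, hf, rfl⟩
    obtain ⟨S, hSH, hS, σ, hσ⟩ := exists_realize_eq hH hf
    refine ⟨σ, ?_⟩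
    rw [← hκ S hSH hS]
    simp only [c, hσ, DFunLike.coe_injective.extend_apply]
  exact (ncard_le_ncard hsub).trans (Finite.card_range_le κ)

/-- After passing to a copy of itself, `C` consists of elements with codes of bounded size taken
from any prescribed infinite set of natural numbers. -/
def FinitelyCoded (C : Type*) [LinearOrder C] : Prop :=
  ∃ (J : Type) (_ : Finite J) (D : ℕ) (p : J → Finset ℕ → C),
    ∀ H : Set ℕ, H.Infinite → ∃ φ : C ↪o C, ∀ x, φ x ∈ codedSet p D H

theorem FinitelyCoded.finiteBRD {C : Type*} [LinearOrder C] (hC : FinitelyCoded C) :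
    finiteBRD C := by
  obtain ⟨J, _, D, p, hp⟩ := hC
  refine fun n _ => ⟨Nat.card (Fin n → J × Finset (Fin (n * D))), fun k hk χ => ?_⟩
  have : NeZero k := ⟨by omega⟩
  obtain ⟨H, hH, hcard⟩ := exists_ncard_image_codedSet_le p D χ
  obtain ⟨φ, hφ⟩ := hp H hH
  refine ⟨range φ, ⟨φ.orderIso.symm⟩, (ncard_le_ncard (image_mono ?_)).trans hcard⟩
  intro f hf i
  obtain ⟨x, hx⟩ := hf i
  exact hx ▸ hφ x

end FinitelyCoded

section Closure

variable {A B C : Type*} [LinearOrder A] [LinearOrder B] [LinearOrder C]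

theorem FinitelyCoded.of_orderIso (hA : FinitelyCoded A) (e : A ≃o B) : FinitelyCoded B := by
  obtain ⟨J, hJ, D, p, hp⟩ := hA
  refine ⟨J, hJ, D, fun j s => e (p j s), fun H hH => ?_⟩
  obtain ⟨φ, hφ⟩ := hp H hH
  refine ⟨(e.symm.toOrderEmbedding.trans φ).trans e.toOrderEmbedding, fun x => ?_⟩
  obtain ⟨j, s, hs, hD, hx⟩ := hφ (e.symm x)
  exact ⟨j, s, hs, hD, congrArg e hx⟩

theorem FinitelyCoded.of_subsingleton [Subsingleton C] : FinitelyCoded C :=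
  ⟨PLift (Nonempty C), inferInstance, 0, fun j _ => j.down.some, fun H _ =>
    ⟨RelEmbedding.refl _, fun x => ⟨⟨⟨x⟩⟩, ∅, by simp, le_rfl, Subsingleton.elim _ _⟩⟩⟩

theorem FinitelyCoded.sumLex (hA : FinitelyCoded A) (hB : FinitelyCoded B) :
    FinitelyCoded (A ⊕ₗ B) := by
  obtain ⟨J, _, D, p, hp⟩ := hA
  obtain ⟨J', _, D', p', hp'⟩ := hB
  refine ⟨J ⊕ J', inferInstance, max D D',
    fun j s => toLex (j.map (fun j => p j s) (fun j => p' j s)), fun H hH => ?_⟩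
  obtain ⟨φ, hφ⟩ := hp H hH
  obtain ⟨φ', hφ'⟩ := hp' H hH
  refine ⟨RelEmbedding.sumLexMap φ φ', ?_⟩
  rintro (x | x)
  · obtain ⟨j, s, hs, hD, hx⟩ := hφ x
    exact ⟨.inl j, s, hs, hD.trans (le_max_left D D'), congrArg Sum.inlₗ hx⟩
  · obtain ⟨j, s, hs, hD, hx⟩ := hφ' x
    exact ⟨.inr j, s, hs, hD.trans (le_max_right D D'), congrArg Sum.inrₗ hx⟩

theorem csInf_insert_of_forall_le {ι : Type*} [ConditionallyCompletePartialOrderInf ι] {a : ι}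
    {s : Set ι} (h : ∀ b ∈ s, a ≤ b) : sInf (insert a s) = a :=
  IsLeast.csInf_eq ⟨mem_insert a s, forall_mem_insert.2 ⟨le_rfl, h⟩⟩

-- The pair `(q, c)` is moved to one coded by the `q`-th element `a q` of `H` together with a code
-- inside `H ∩ Ioi (a q)`, so that the decoder recovers `a q` as the least element.
theorem FinitelyCoded.natProdLex (hC : FinitelyCoded C) : FinitelyCoded (ℕ ×ₗ C) := by
  obtain ⟨J, hJ, D, p, hp⟩ := hC
  refine ⟨J, hJ, D + 1, fun j s => toLex (sInf (s : Set ℕ), p j (s.erase (sInf (s : Set ℕ)))),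
    fun H hH => ?_⟩
  let a : ℕ → ℕ := Nat.nth (· ∈ H)
  have hinf (q : ℕ) : (H ∩ Ioi (a q)).Infinite := by
    rw [← compl_Iic, ← sdiff_eq]
    exact hH.sdiff (finite_Iic _)
  choose φ hφ using fun q => hp _ (hinf q)
  refine ⟨OrderEmbedding.ofStrictMono
    (fun x => toLex (a (ofLex x).1, φ (ofLex x).1 (ofLex x).2)) ?_, ?_⟩
  · intro x y hxy
    rw [Prod.Lex.toLex_lt_toLex]
    rcases Prod.Lex.lt_iff.1 hxy with h | ⟨h, h'⟩
    · exact .inl (Nat.nth_strictMono hH h)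
    · exact .inr ⟨congrArg a h, by simpa only [h, (φ _).lt_iff_lt] using h'⟩
  · intro x
    obtain ⟨j, s, hs, hD, hx⟩ := hφ (ofLex x).1 (ofLex x).2
    have hlt : ∀ b ∈ s, a (ofLex x).1 < b := fun b hb => (hs hb).2
    refine ⟨j, insert (a (ofLex x).1) s, ?_, ?_, ?_⟩
    · rw [Finset.coe_insert]
      exact insert_subset (Nat.nth_mem_of_infinite hH _) (hs.trans inter_subset_left)
    · exact (Finset.card_insert_le _ _).trans (Nat.succ_le_succ hD)
    · change toLex _ = toLex _
      rw [Finset.coe_insert, csInf_insert_of_forall_le fun b hb => (hlt b hb).le,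
        Finset.erase_insert fun h => (hlt _ h).false, hx]

end Closure

section OrdinalFinitelyCoded

open Ordinal

theorem nonempty_orderIso_toType_add (α β : Ordinal) :
    Nonempty (α.ToType ⊕ₗ β.ToType ≃o (α + β).ToType) := by
  obtain ⟨e⟩ := type_eq.1 ((type_sum_lex (α := α.ToType) (β := β.ToType) (· < ·) (· < ·)).trans
    (by simp only [type_toType]) : _ = typeLT (α + β).ToType)
  exact ⟨OrderIso.ofRelIsoLT e⟩

theorem nonempty_orderIso_toType_mul_omega0 (γ : Ordinal) :
    Nonempty (ℕ ×ₗ γ.ToType ≃o (γ * ω).ToType) := by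
  obtain ⟨e⟩ := type_eq.1 ((type_prod_lex (β := ULift ℕ) (α := γ.ToType) (· < ·) (· < ·)).trans
    (by simp [type_toType]) : _ = typeLT (γ * ω).ToType)
  exact ⟨(Prod.Lex.prodLexCongr ULift.orderIso.symm (.refl _)).trans (OrderIso.ofRelIsoLT e)⟩

theorem finitelyCoded_toType_opow (d : ℕ) : FinitelyCoded (ω ^ (d : Ordinal)).ToType := by
  induction d with
  | zero =>
    rw [Nat.cast_zero, opow_zero]
    exact .of_subsingleton
  | succ d ih =>
    obtain ⟨e⟩ := nonempty_orderIso_toType_mul_omega0 (ω ^ (d : Ordinal))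
    rw [Nat.cast_succ, opow_add, opow_one]
    exact ih.natProdLex.of_orderIso e

theorem finitelyCoded_toType_mul_natCast {γ : Ordinal} (h : FinitelyCoded γ.ToType) (q : ℕ) :
    FinitelyCoded (γ * q).ToType := by
  induction q with
  | zero =>
    rw [Nat.cast_zero, mul_zero]
    exact .of_subsingleton
  | succ q ih =>
    obtain ⟨e⟩ := nonempty_orderIso_toType_add (γ * q) γ
    rw [Nat.cast_succ, mul_add, mul_one]
    exact (ih.sumLex h).of_orderIso e

theorem finitelyCoded_toType_of_lt_opow {d : ℕ} {α : Ordinal} (h : α < ω ^ (d : Ordinal)) :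
    FinitelyCoded α.ToType := by
  induction d generalizing α with
  | zero =>
    rw [Nat.cast_zero, opow_zero, Order.lt_one_iff] at h
    subst h
    exact .of_subsingleton
  | succ d ih =>
    rw [Nat.cast_succ, opow_add, opow_one, lt_mul_iff] at h
    obtain ⟨q, hq, r, hr, rfl⟩ := h
    obtain ⟨q, rfl⟩ := lt_omega0.1 hq
    obtain ⟨e⟩ := nonempty_orderIso_toType_add (ω ^ (d : Ordinal) * q) r
    have hmul := finitelyCoded_toType_mul_natCast (finitelyCoded_toType_opow d) q
    exact (hmul.sumLex (ih hr)).of_orderIso e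

theorem finitelyCoded_Iio {α : Ordinal} (h : α < ω ^ ω) : FinitelyCoded (Iio α) := by
  obtain ⟨c, hc, h⟩ := (lt_opow_of_isSuccLimit omega0_ne_zero isSuccLimit_omega0).1 h
  obtain ⟨d, rfl⟩ := lt_omega0.1 hc
  exact (finitelyCoded_toType_of_lt_opow h).of_orderIso ToType.mk.symm

end OrdinalFinitelyCoded

section OrdinalIsLarge

open Ordinal

theorem isLarge_Ico_opow (m : ℕ) (γ : Ordinal) :
    IsLarge m (Ico γ (γ + ω ^ (m : Ordinal))) := by
  induction m generalizing γ with
  | zero => exact ⟨γ, by simp⟩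
  | succ m ih =>
    have hblock (i : ℕ) : γ + ω ^ (m : Ordinal) * i + ω ^ (m : Ordinal) =
        γ + ω ^ (m : Ordinal) * ((i + 1 : ℕ) : Ordinal) := by
      rw [Nat.cast_succ, mul_add_one, add_assoc]
    refine ⟨fun i => Ico (γ + ω ^ (m : Ordinal) * i)
      (γ + ω ^ (m : Ordinal) * i + ω ^ (m : Ordinal)),
      fun i => ⟨Ico_subset_Ico le_self_add ?_, ih _⟩, fun i j hij x hx y hy => ?_⟩
    · rw [hblock, Nat.cast_succ m, opow_add, opow_one]
      gcongr
      exact (natCast_lt_omega0 (i + 1)).le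
    · refine (hx.2.trans_le ?_).trans_le hy.1
      rw [hblock]
      gcongr
      exact hij

theorem isLarge_univ_Iio {α : Ordinal} (hα : ω ^ ω ≤ α) (m : ℕ) :
    IsLarge m (univ : Set (Iio α)) := by
  rw [← isLarge_image (OrderEmbedding.subtype (· ∈ Iio α))]
  refine (isLarge_Ico_opow m 0).mono fun x hx => ⟨⟨x, ?_⟩, mem_univ _, rfl⟩
  rw [zero_add] at hx
  calc x < ω ^ (m : Ordinal) := hx.2
    _ ≤ ω ^ ω := opow_le_opow_right omega0_pos (natCast_lt_omega0 m).le
    _ ≤ α := hα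

theorem countable_Iio_of_card_le {α : Ordinal} (h : α.card ≤ Cardinal.aleph0) :
    Countable (Iio α) := by
  rwa [← Cardinal.mk_le_aleph0_iff, Cardinal.mk_Iio_ordinal, Cardinal.lift_le_aleph0]

end OrdinalIsLarge

/-- Main theorem: a countable ordinal `α` has finite big Ramsey degrees iff `α < ω^ω`;
moreover if `α ≥ ω^ω` then `T(n, α) = ∞` for all `2 ≤ n < ω`. -/
theorem stmt18 (α : Ordinal) (hcnt : α.card ≤ Cardinal.aleph0) :
    (finiteBRD ↥(Set.Iio α) ↔ α < Ordinal.omega0 ^ Ordinal.omega0) ∧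
    (Ordinal.omega0 ^ Ordinal.omega0 ≤ α →
      ∀ n : ℕ, 2 ≤ n → ¬∃ t : ℕ, brdLE ↥(Set.Iio α) n t) := by
  have hinfinite (hα : Ordinal.omega0 ^ Ordinal.omega0 ≤ α) (n : ℕ) (hn : 2 ≤ n) :
      ¬∃ t : ℕ, brdLE ↥(Set.Iio α) n t := by
    have := countable_Iio_of_card_le hcnt
    exact not_exists.2 fun t => not_brdLE_of_forall_isLarge (isLarge_univ_Iio hα) hn
  refine ⟨⟨fun hfinite => ?_, fun hα => (finitelyCoded_Iio hα).finiteBRD⟩, hinfinite⟩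
  by_contra hα
  exact hinfinite (not_lt.1 hα) 2 le_rfl (hfinite 2 one_le_two)
end
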